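/- arXiv:2401.01971 — 2 statements merged into one kernel-verified Lean document; each statement's English description precedes it below -/
import Mathlib

section
/- Let μ be a positive Borel measure on ℝ with all moments finite, let 1 ≤ m < n, and assume H_k[μ] ≠ 0 for every k with 1 ≤ k ≤ n−m. Let A = (a_{jk})_{j,k=1}^{m} be a complex m×m matrix and x_1,…,x_m, y_1,…,y_m ∈ ℂ. Let H_n^F[μ; x_1,…,x_m; y_1,…,y_m; A] denote the determinant of the n×n matrix whose (j,k) entry equals μ_{j+k−2} for 1 ≤ j,k ≤ n−m, equals x_i^{j−1} when k = n−m+i and 1 ≤ j ≤ n−m, equals y_i^{k−1} when j = n−m+i and 1 ≤ k ≤ n−m, and equals a_{il} when j = n−m+i and k = n−m+l. Then H_n^F[μ; x_1,…,x_m; y_1,…,y_m; A] = H_{n−m}[μ] · det( a_{jk} − K_{n−m−1}(x_k, y_j) )_{j,k=1}^{m}. -/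
open MeasureTheory Matrix Finset

/-- The `k`-th moment of a positive measure `μ` on `ℝ`. -/
noncomputable def mom (μ : Measure ℝ) (k : ℕ) : ℝ := ∫ x, x ^ k ∂μ

/-- The `n × n` Hankel determinant `H_n[μ] = det (μ_{j+k})_{j,k=0}^{n-1}` (with `H_0[μ] = 1`). -/
noncomputable def hankelDet (μ : Measure ℝ) (n : ℕ) : ℝ :=
  Matrix.det (Matrix.of fun j k : Fin n => mom μ (j + k))

/-- The `k`-th monic orthogonal polynomial associated with `μ`, evaluated at `z ∈ ℂ`. -/
noncomputable def monicOP (μ : Measure ℝ) (k : ℕ) (z : ℂ) : ℂ :=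
  ((hankelDet μ k : ℝ) : ℂ)⁻¹ *
    Matrix.det (Matrix.of fun i j : Fin (k + 1) =>
      if (i : ℕ) < k then ((mom μ ((i : ℕ) + (j : ℕ)) : ℝ) : ℂ) else z ^ (j : ℕ))

/-- The norm `h_k = H_{k+1}[μ] / H_k[μ]` of the `k`-th monic orthogonal polynomial. -/
noncomputable def opNorm (μ : Measure ℝ) (k : ℕ) : ℝ := hankelDet μ (k + 1) / hankelDet μ k

/-- The reproducing kernel `K_N(x,y) = Σ_{k=0}^{N} P_k(x) P_k(y) / h_k`. -/
noncomputable def repKer (μ : Measure ℝ) (N : ℕ) (x y : ℂ) : ℂ :=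
  ∑ k ∈ Finset.range (N + 1), monicOP μ k x * monicOP μ k y / ((opNorm μ k : ℝ) : ℂ)

/-!
The Schur complement of the moment block turns the framed determinant into
`H_N · det (A - (y_jᵀ G_N⁻¹ x_k)_{jk})`, where `G_N` is the `N × N` moment matrix and `x_k`, `y_j`
are the vectors of monomials. It remains to see that `yᵀ G_N⁻¹ x` is the reproducing kernel. By
block inversion, passing from `G_N` to `G_{N+1}` adds to `yᵀ G_N⁻¹ x` a single product divided by
the Schur complement of `G_N` in `G_{N+1}`. By the Schur determinant formula the two factors are
the orthogonal polynomials `P_N(x)` and `P_N(y)`, and the Schur complement is the norm `h_N`.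

The argument runs for an arbitrary infinite matrix over a field, the orthogonal polynomials being
replaced by leading minors with their last row or column exchanged for a given vector.
-/

section BlockMatrix

variable {R ι κ : Type*} [CommRing R] [Fintype ι] [DecidableEq ι] [Fintype κ] [DecidableEq κ]

theorem det_fromBlocks_of_isUnit {M : Matrix ι ι R} (hM : IsUnit M) (B : Matrix ι κ R)
    (C : Matrix κ ι R) (D : Matrix κ κ R) :
    (fromBlocks M B C D).det = M.det * (D - C * M⁻¹ * B).det := by
  have := hM.invertible
  rw [det_fromBlocks₁₁, invOf_eq_nonsing_inv]

theorem inv_fromBlocks_of_isUnit {M : Matrix ι ι R} {B : Matrix ι κ R} {C : Matrix κ ι R}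
    {D : Matrix κ κ R} (hM : IsUnit M) (hS : IsUnit (D - C * M⁻¹ * B)) :
    (fromBlocks M B C D)⁻¹ =
      fromBlocks (M⁻¹ + M⁻¹ * B * (D - C * M⁻¹ * B)⁻¹ * C * M⁻¹) (-(M⁻¹ * B * (D - C * M⁻¹ * B)⁻¹))
        (-((D - C * M⁻¹ * B)⁻¹ * C * M⁻¹)) (D - C * M⁻¹ * B)⁻¹ := by
  have := hM.invertible
  rw [← invOf_eq_nonsing_inv M] at hS ⊢
  have := hS.invertible
  have := fromBlocks₁₁Invertible M B C D
  simp only [← invOf_eq_nonsing_inv, invOf_fromBlocks₁₁_eq]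

theorem sumElim_dotProduct_inv_fromBlocks_mulVec_sumElim {M : Matrix ι ι R} {B : Matrix ι κ R}
    {C : Matrix κ ι R} {D : Matrix κ κ R} (hM : IsUnit M) (hS : IsUnit (D - C * M⁻¹ * B))
    (w v : ι → R) (w' v' : κ → R) :
    Sum.elim w w' ⬝ᵥ (fromBlocks M B C D)⁻¹ *ᵥ Sum.elim v v' =
      w ⬝ᵥ M⁻¹ *ᵥ v +
        (w' - w ᵥ* (M⁻¹ * B)) ⬝ᵥ (D - C * M⁻¹ * B)⁻¹ *ᵥ (v' - C *ᵥ M⁻¹ *ᵥ v) := by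
  rw [inv_fromBlocks_of_isUnit hM hS, fromBlocks_mulVec, sumElim_dotProduct_sumElim]
  simp only [Sum.elim_comp_inl, Sum.elim_comp_inr, add_mulVec, neg_mulVec, mulVec_sub,
    mulVec_mulVec, dotProduct_add, dotProduct_sub, dotProduct_neg, sub_dotProduct,
    ← dotProduct_mulVec, Matrix.mul_assoc]
  ring

theorem dotProduct_inv_mulVec_of_unique {K : Type*} [Field K] [Unique κ]
    (S : Matrix κ κ K) (v w : κ → K) :
    w ⬝ᵥ S⁻¹ *ᵥ v = v default * w default / S default default := by
  simp only [inv_subsingleton, Ring.inverse_eq_inv, dotProduct, mulVec_diagonal, univ_unique,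
    sum_singleton]
  ring

theorem det_of_dite_lt_eq_det_fromBlocks {p q n : ℕ} (h : p + q = n) (M : Matrix (Fin p) (Fin p) R)
    (B : Matrix (Fin p) (Fin q) R) (C : Matrix (Fin q) (Fin p) R) (D : Matrix (Fin q) (Fin q) R) :
    (of fun j k : Fin n =>
      if hj : (j : ℕ) < p then
        (if hk : (k : ℕ) < p then M ⟨j, hj⟩ ⟨k, hk⟩ else B ⟨j, hj⟩ ⟨k - p, by omega⟩)
      else
        (if hk : (k : ℕ) < p then C ⟨j - p, by omega⟩ ⟨k, hk⟩
         else D ⟨j - p, by omega⟩ ⟨k - p, by omega⟩)).det =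
      (fromBlocks M B C D).det := by
  subst h
  rw [← det_submatrix_equiv_self finSumFinEquiv]
  congr 1
  ext (i | i) (j | j) <;> simp

end BlockMatrix

section LeadingBlock

variable {R : Type*}

/-- The `n × n` upper-left block of an infinite matrix. -/
def leadingBlock (G : Matrix ℕ ℕ R) (n : ℕ) : Matrix (Fin n) (Fin n) R :=
  G.submatrix Fin.val Fin.val

variable {G : Matrix ℕ ℕ R} {n : ℕ}

theorem leadingBlock_updateRow_self (w : ℕ → R) :
    leadingBlock (G.updateRow n w) n = leadingBlock G n := by
  ext i j
  simp [leadingBlock, updateRow_apply, i.isLt.ne]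

theorem leadingBlock_updateCol_self (v : ℕ → R) :
    leadingBlock (G.updateCol n v) n = leadingBlock G n := by
  ext i j
  simp [leadingBlock, j.isLt.ne]

theorem leadingBlock_succ_submatrix_finSumFinEquiv :
    (leadingBlock G (n + 1)).submatrix finSumFinEquiv finSumFinEquiv =
      fromBlocks (leadingBlock G n) (of fun i (_ : Fin 1) => G i n) (of fun (_ : Fin 1) j => G n j)
        (of fun _ _ => G n n) := by
  ext (i | i) (j | j) <;> simp [leadingBlock]

end LeadingBlock

section LeadingMinor

variable {R : Type*} [CommRing R] (G : Matrix ℕ ℕ R) (n : ℕ)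

/-- The `n`-th leading principal minor of an infinite matrix. -/
def leadingMinor : R := (leadingBlock G n).det

/-- The bilinear form `wᵀ Gₙ⁻¹ v` of the inverse of the `n × n` upper-left block `Gₙ` of `G`,
where the infinite vectors `v` and `w` are truncated to their first `n` entries. -/
noncomputable def leadingInvForm (v w : ℕ → R) : R :=
  (fun i : Fin n => w i) ⬝ᵥ (leadingBlock G n)⁻¹ *ᵥ fun i : Fin n => v i

theorem leadingMinor_zero : leadingMinor G 0 = 1 := det_fin_zero

theorem leadingMinor_transpose : leadingMinor Gᵀ n = leadingMinor G n :=
  det_transpose (leadingBlock G n)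

theorem schurComplement_leadingBlock :
    (of fun _ _ => G n n) - (of fun (_ : Fin 1) (j : Fin n) => G n j) * (leadingBlock G n)⁻¹ *
        (of fun (i : Fin n) (_ : Fin 1) => G i n) =
      of fun _ _ => G n n - leadingInvForm G n (G.col n) (G.row n) := by
  rw [Matrix.mul_assoc]
  rfl

variable {G n}

theorem isUnit_leadingBlock (hn : IsUnit (leadingMinor G n)) : IsUnit (leadingBlock G n) :=
  (isUnit_iff_isUnit_det _).mpr hn

theorem leadingMinor_succ (hn : IsUnit (leadingMinor G n)) :
    leadingMinor G (n + 1) =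
      leadingMinor G n * (G n n - leadingInvForm G n (G.col n) (G.row n)) := by
  rw [leadingMinor, ← det_submatrix_equiv_self finSumFinEquiv,
    leadingBlock_succ_submatrix_finSumFinEquiv, det_fromBlocks_of_isUnit (isUnit_leadingBlock hn),
    schurComplement_leadingBlock, det_fin_one, of_apply, leadingMinor]

theorem leadingMinor_updateRow_succ (hn : IsUnit (leadingMinor G n)) (w : ℕ → R) :
    leadingMinor (G.updateRow n w) (n + 1) =
      leadingMinor G n * (w n - leadingInvForm G n (G.col n) w) := by
  have hblock : leadingBlock (G.updateRow n w) n = leadingBlock G n :=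
    leadingBlock_updateRow_self w
  have hcol (i : Fin n) : G.updateRow n w i n = G i n := by rw [updateRow_ne i.isLt.ne]
  rw [leadingMinor_succ (by rwa [leadingMinor, hblock])]
  simp only [leadingMinor, leadingInvForm, hblock, row_apply, col_apply, updateRow_self, hcol]

theorem leadingMinor_updateCol_succ (hn : IsUnit (leadingMinor G n)) (v : ℕ → R) :
    leadingMinor (G.updateCol n v) (n + 1) =
      leadingMinor G n * (v n - leadingInvForm G n v (G.row n)) := by
  have hblock : leadingBlock (G.updateCol n v) n = leadingBlock G n :=
    leadingBlock_updateCol_self v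
  have hrow (j : Fin n) : G.updateCol n v n j = G n j := by rw [updateCol_ne j.isLt.ne]
  rw [leadingMinor_succ (by rwa [leadingMinor, hblock])]
  simp only [leadingMinor, leadingInvForm, hblock, row_apply, col_apply, updateCol_self, hrow]

theorem leadingInvForm_succ_eq_sumElim (v w : ℕ → R) :
    leadingInvForm G (n + 1) v w =
      Sum.elim (fun i : Fin n => w i) (fun _ : Fin 1 => w n) ⬝ᵥ
        (fromBlocks (leadingBlock G n) (of fun i _ => G i n) (of fun _ j => G n j)
          (of fun _ _ => G n n))⁻¹ *ᵥ Sum.elim (fun i : Fin n => v i) (fun _ : Fin 1 => v n) := by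
  have sumElim_eq (u : ℕ → R) : Sum.elim (fun i : Fin n => u i) (fun _ : Fin 1 => u n) =
      (fun i : Fin (n + 1) => u i) ∘ finSumFinEquiv := by
    ext (i | i) <;> simp
  rw [← leadingBlock_succ_submatrix_finSumFinEquiv, inv_submatrix_equiv, sumElim_eq, sumElim_eq,
    submatrix_mulVec_equiv, Function.comp_assoc, Equiv.self_comp_symm, Function.comp_id,
    comp_equiv_dotProduct_comp_equiv, leadingInvForm]

end LeadingMinor

section BiorthogonalKernel

variable {K : Type*} [Field K] {G : Matrix ℕ ℕ K} {n : ℕ}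

theorem leadingInvForm_succ (hn : leadingMinor G n ≠ 0) (hn' : leadingMinor G (n + 1) ≠ 0)
    (v w : ℕ → K) :
    leadingInvForm G (n + 1) v w = leadingInvForm G n v w +
      (v n - leadingInvForm G n v (G.row n)) * (w n - leadingInvForm G n (G.col n) w) /
        (G n n - leadingInvForm G n (G.col n) (G.row n)) := by
  have hschur : G n n - leadingInvForm G n (G.col n) (G.row n) ≠ 0 :=
    right_ne_zero_of_mul (leadingMinor_succ hn.isUnit ▸ hn')
  rw [leadingInvForm_succ_eq_sumElim, sumElim_dotProduct_inv_fromBlocks_mulVec_sumElim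
    (isUnit_leadingBlock hn.isUnit), schurComplement_leadingBlock]
  · rw [dotProduct_inv_mulVec_of_unique (κ := Fin 1)]
    rfl
  · rw [schurComplement_leadingBlock, isUnit_iff_isUnit_det, det_fin_one]
    exact hschur.isUnit

/-- The kernel `∑_{k<n} Q_k(v) P_k(w) / h_k` of the biorthogonal system of `G`: `P_k(w)` is the
leading minor of order `k + 1` of `G` with row `k` replaced by `w`, divided by the one of order `k`
of `G`; `Q_k(v)` is the same with column `k` replaced by `v`; and `h_k` is the quotient of the
leading minors of orders `k + 1` and `k`. The quotients are multiplied out. -/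
noncomputable def biorthogonalKernel (G : Matrix ℕ ℕ K) (n : ℕ) (v w : ℕ → K) : K :=
  ∑ k ∈ range n, leadingMinor (G.updateCol k v) (k + 1) * leadingMinor (G.updateRow k w) (k + 1) /
    (leadingMinor G k * leadingMinor G (k + 1))

theorem leadingInvForm_eq_biorthogonalKernel (hG : ∀ k ≤ n, leadingMinor G k ≠ 0)
    (v w : ℕ → K) : leadingInvForm G n v w = biorthogonalKernel G n v w := by
  induction n with
  | zero => simp [leadingInvForm, biorthogonalKernel]
  | succ n ih =>
    have hn := hG n n.le_succ
    have hn' := hG (n + 1) le_rfl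
    rw [leadingInvForm_succ hn hn', ih fun k hk => hG k (hk.trans n.le_succ), biorthogonalKernel,
      biorthogonalKernel, sum_range_succ, leadingMinor_updateRow_succ hn.isUnit,
      leadingMinor_updateCol_succ hn.isUnit, leadingMinor_succ hn.isUnit]
    field_simp

theorem framed_hankel_eq_repKer_det_general {ι : Type*} [Fintype ι] [DecidableEq ι]
    (hG : ∀ k ≤ n, leadingMinor G k ≠ 0) (A : Matrix ι ι K) (X Y : ι → ℕ → K) :
    (fromBlocks (leadingBlock G n) (of fun i k => X k i) (of fun j i => Y j i) A).det =
      leadingMinor G n * (of fun j k => A j k - biorthogonalKernel G n (X k) (Y j)).det := by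
  rw [det_fromBlocks_of_isUnit (isUnit_leadingBlock (hG n le_rfl).isUnit), leadingMinor]
  congr 2
  ext j k
  rw [of_apply, ← leadingInvForm_eq_biorthogonalKernel hG, Matrix.mul_assoc]
  rfl

end BiorthogonalKernel

section Moments

variable (μ : Measure ℝ)

/-- The infinite Hankel matrix `(μ_{i+j})` of the moments of `μ`, with complex entries because the
orthogonal polynomials are evaluated at complex points. -/
noncomputable def momentMatrix : Matrix ℕ ℕ ℂ := of fun i j => (mom μ (i + j) : ℂ)

theorem momentMatrix_transpose : (momentMatrix μ)ᵀ = momentMatrix μ := by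
  ext i j
  simp [momentMatrix, add_comm]

theorem leadingMinor_momentMatrix (n : ℕ) : leadingMinor (momentMatrix μ) n = hankelDet μ n :=
  (Complex.ofRealHom.map_det _).symm

theorem leadingMinor_momentMatrix_ne_zero {N : ℕ}
    (hH : ∀ k, 1 ≤ k → k ≤ N → hankelDet μ k ≠ 0) :
    ∀ k ≤ N, leadingMinor (momentMatrix μ) k ≠ 0
  | 0, _ => by simp [leadingMinor_zero]
  | k + 1, hk => by
    rw [leadingMinor_momentMatrix]
    exact_mod_cast hH (k + 1) k.succ_pos hk

theorem monicOP_eq_leadingMinor_updateRow_div (k : ℕ) (z : ℂ) :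
    monicOP μ k z =
      leadingMinor ((momentMatrix μ).updateRow k (z ^ ·)) (k + 1) / hankelDet μ k := by
  rw [monicOP, inv_mul_eq_div, leadingMinor]
  congr 2
  ext i j
  simp [leadingBlock, momentMatrix, updateRow_apply, (Nat.lt_succ_iff.mp i.isLt).lt_iff_ne, ite_not]

theorem monicOP_eq_leadingMinor_updateCol_div (k : ℕ) (z : ℂ) :
    monicOP μ k z =
      leadingMinor ((momentMatrix μ).updateCol k (z ^ ·)) (k + 1) / hankelDet μ k := by
  rw [monicOP_eq_leadingMinor_updateRow_div, ← leadingMinor_transpose, ← updateCol_transpose,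
    momentMatrix_transpose]

theorem repKer_eq_biorthogonalKernel (N : ℕ) (x y : ℂ) :
    repKer μ N x y = biorthogonalKernel (momentMatrix μ) (N + 1) (x ^ ·) (y ^ ·) := by
  refine sum_congr rfl fun k _ => ?_
  rw [monicOP_eq_leadingMinor_updateCol_div, monicOP_eq_leadingMinor_updateRow_div, opNorm,
    Complex.ofReal_div, leadingMinor_momentMatrix, leadingMinor_momentMatrix]
  field_simp

end Moments

/-- Proposition 1.4: the framed Hankel determinant with monomial borders equals
`H_{n-m}[μ] · det(a_{jk} - K_{n-m-1}(x_k, y_j))`. -/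
theorem framed_hankel_eq_repKer_det
    (μ : Measure ℝ) (hmom : ∀ k : ℕ, Integrable (fun x : ℝ => x ^ k) μ)
    (n m : ℕ) (hm : 1 ≤ m) (hmn : m < n)
    (hH : ∀ k : ℕ, 1 ≤ k → k ≤ n - m → hankelDet μ k ≠ 0)
    (A : Matrix (Fin m) (Fin m) ℂ) (x y : Fin m → ℂ) :
    Matrix.det (Matrix.of fun j k : Fin n =>
      if hj : (j : ℕ) < n - m then
        (if hk : (k : ℕ) < n - m then ((mom μ ((j : ℕ) + (k : ℕ)) : ℝ) : ℂ)
         else x ⟨(k : ℕ) - (n - m), by have := k.isLt; omega⟩ ^ (j : ℕ))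
      else
        (if hk : (k : ℕ) < n - m then y ⟨(j : ℕ) - (n - m), by have := j.isLt; omega⟩ ^ (k : ℕ)
         else A ⟨(j : ℕ) - (n - m), by have := j.isLt; omega⟩
                ⟨(k : ℕ) - (n - m), by have := k.isLt; omega⟩)) =
    ((hankelDet μ (n - m) : ℝ) : ℂ) *
      Matrix.det (Matrix.of fun j k : Fin m => A j k - repKer μ (n - m - 1) (x k) (y j)) := by
  simp only [repKer_eq_biorthogonalKernel, Nat.sub_add_cancel (Nat.sub_pos_of_lt hmn)]
  rw [← leadingMinor_momentMatrix,
    ← framed_hankel_eq_repKer_det_general (leadingMinor_momentMatrix_ne_zero μ hH) A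
      (fun k i => x k ^ i) (fun j i => y j ^ i),
    ← det_of_dite_lt_eq_det_fromBlocks (Nat.sub_add_cancel hmn.le)]
  rfl
end

section
/- Let n ≥ 3 and let a, b, c : ℤ → ℂ be arbitrary sequences. For a sequence f : ℤ → ℂ define the shifted sequences (Sf)_r := f_{r−1} and (S^{−1}f)_r := f_{r+1}. For sequences u and v,w define the one-bordered determinant D_N^B[u; v] as the determinant of the N×N matrix whose (j,k) entry equals u_{k−j} for 1 ≤ k ≤ N−1 and equals v_{N−j} for k = N, the two-bordered determinant D_N^B[u; v, w] as the determinant of the N×N matrix whose (j,k) entry equals u_{k−j} for 1 ≤ k ≤ N−2, equals v_{N−j} for k = N−1, and equals w_{N−j} for k = N, and the pure Toeplitz determinant D_N[u] = det(u_{j−k})_{j,k=1}^{N}. Then the following Dodgson condensation identity holds: D_n^B[a; b, c] · D_{n−2}[Sa] = D_{n−1}^B[a; S^{−1}b] · D_{n−1}^B[Sa; c] − D_{n−1}^B[a; S^{−1}c] · D_{n−1}^B[Sa; b]. -/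
open Matrix

/-- The pure Toeplitz determinant `D_N[u] = det (u_{j-k})_{j,k=1}^{N}`. -/
def pureToeplitzDet (u : ℤ → ℂ) (N : ℕ) : ℂ :=
  Matrix.det (Matrix.of fun j k : Fin N => u ((j : ℤ) - (k : ℤ)))

/-- The one-bordered determinant `D_N^B[u; v]`: the `N × N` matrix has `(j,k)` entry `u_{k-j}`
for `1 ≤ k ≤ N-1` and `v_{N-j}` for `k = N` (indices starting at 1). -/
def borderedDet₁ (u v : ℤ → ℂ) (N : ℕ) : ℂ :=
  Matrix.det (Matrix.of fun j k : Fin N =>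
    if (k : ℕ) < N - 1 then u ((k : ℤ) - (j : ℤ)) else v ((N : ℤ) - 1 - (j : ℤ)))

/-- The two-bordered determinant `D_N^B[u; v, w]`: the `N × N` matrix has `(j,k)` entry
`u_{k-j}` for `1 ≤ k ≤ N-2`, `v_{N-j}` for `k = N-1`, and `w_{N-j}` for `k = N`. -/
def borderedDet₂ (u v w : ℤ → ℂ) (N : ℕ) : ℂ :=
  Matrix.det (Matrix.of fun j k : Fin N =>
    if (k : ℕ) < N - 2 then u ((k : ℤ) - (j : ℤ))
    else if (k : ℕ) = N - 2 then v ((N : ℤ) - 1 - (j : ℤ))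
    else w ((N : ℤ) - 1 - (j : ℤ)))

/-!
Let `M` have blocks `K`, `P`, `Q`, `S`, with `S` of size `s`. Bordering `K` by one further row and
one further column of `M` gives `s ^ 2` minors, which are the entries of
`det K • S - Q * adj K * P`, a Schur complement cleared of denominators; its determinant is
therefore `det K ^ (s - 1) * det M` (Sylvester). For `s = 2` this is the Desnanot–Jacobi identity.
Applied to the two-bordered Toeplitz matrix with its first and last rows and its two border columns
singled out, it is the condensation relation, because deleting the first row of a Toeplitz matrix
shifts its coefficient sequence.
-/

section Sylvester

variable {R m n : Type*} [CommRing R] [Fintype m] [DecidableEq m]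

theorem det_pow_card_mul_det_fromBlocks [Fintype n] [DecidableEq n] (K : Matrix m m R)
    (P : Matrix m n R) (Q : Matrix n m R) (S : Matrix n n R) :
    K.det ^ Fintype.card n * (fromBlocks K P Q S).det =
      K.det * (K.det • S - Q * K.adjugate * P).det := by
  have block_elimination :
      fromBlocks 1 0 (-(Q * K.adjugate)) (K.det • 1) * fromBlocks K P Q S =
        fromBlocks K P 0 (K.det • S - Q * K.adjugate * P) := by
    simp [fromBlocks_multiply, Matrix.mul_assoc, adjugate_mul, sub_eq_neg_add]
  simpa using congrArg det block_elimination

-- After adding `X • 1` to `K`, the determinant of `K` is monic, hence can be cancelled.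
theorem det_pow_card_sub_one_mul_det_fromBlocks [Fintype n] [DecidableEq n] [Nonempty n]
    (K : Matrix m m R) (P : Matrix m n R) (Q : Matrix n m R) (S : Matrix n n R) :
    K.det ^ (Fintype.card n - 1) * (fromBlocks K P Q S).det =
      (K.det • S - Q * K.adjugate * P).det := by
  let ev : Polynomial R →+* R := Polynomial.evalRingHom 0
  let K' : Matrix m m (Polynomial R) := (Polynomial.X : Polynomial R) • 1 + K.map Polynomial.C
  let P' := P.map (Polynomial.C : R →+* Polynomial R)
  let Q' := Q.map (Polynomial.C : R →+* Polynomial R)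
  let S' := S.map (Polynomial.C : R →+* Polynomial R)
  have det_regular : IsRegular K'.det :=
    Polynomial.Monic.isRegular (Polynomial.leadingCoeff_det_X_one_add_C K)
  have generic : K'.det ^ (Fintype.card n - 1) * (fromBlocks K' P' Q' S').det =
      (K'.det • S' - Q' * K'.adjugate * P').det := by
    apply det_regular.left
    simpa only [← mul_assoc, mul_pow_sub_one Fintype.card_ne_zero] using
      det_pow_card_mul_det_fromBlocks K' P' Q' S'
  have eval_K : K'.map ev = K := by ext; simp [K', ev]
  have eval_P : P'.map ev = P := by ext; simp [P', ev]
  have eval_Q : Q'.map ev = Q := by ext; simp [Q', ev]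
  have eval_S : S'.map ev = S := by ext; simp [S', ev]
  have eval_adjugate : K'.adjugate.map ev = K.adjugate := by
    rw [← eval_K]
    exact ev.map_adjugate K'
  have eval_det : ev K'.det = K.det := by rw [ev.map_det, ev.mapMatrix_apply, eval_K]
  have eval_schur : (K'.det • S' - Q' * K'.adjugate * P').map ev =
      K.det • S - Q * K.adjugate * P := by
    rw [Matrix.map_sub _ (map_sub ev), Matrix.map_mul, Matrix.map_mul,
      Matrix.map_smul' _ _ _ (map_mul ev), eval_det, eval_S, eval_Q, eval_adjugate, eval_P]
  simpa only [map_mul, map_pow, eval_det, ev.map_det, ev.mapMatrix_apply, fromBlocks_map, eval_K,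
    eval_P, eval_Q, eval_S, eval_schur] using congrArg ev generic

/-- The bordered minor of `M` at `(i, j)`: the determinant of the upper left block of `M` extended
by row `i` and column `j` of the complementary index set. The added index lives in `Fin 1`, so that
the minor is again the determinant of a block matrix. -/
def borderedMinor (M : Matrix (m ⊕ n) (m ⊕ n) R) (i j : n) : R :=
  (M.submatrix (Sum.map id fun _ : Fin 1 => i) (Sum.map id fun _ : Fin 1 => j)).det

theorem borderedMinor_fromBlocks (K : Matrix m m R) (P : Matrix m n R) (Q : Matrix n m R)
    (S : Matrix n n R) (i j : n) :
    borderedMinor (fromBlocks K P Q S) i j = (K.det • S - Q * K.adjugate * P) i j := by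
  have submatrix_eq : (fromBlocks K P Q S).submatrix (Sum.map id fun _ : Fin 1 => i)
      (Sum.map id fun _ : Fin 1 => j) =
      fromBlocks K (P.submatrix id fun _ => j) (Q.submatrix (fun _ => i) id)
        (S.submatrix (fun _ => i) fun _ => j) := by
    ext (_ | _) (_ | _) <;> rfl
  have schur := det_pow_card_sub_one_mul_det_fromBlocks K (P.submatrix id fun _ : Fin 1 => j)
    (Q.submatrix (fun _ : Fin 1 => i) id) (S.submatrix (fun _ => i) fun _ => j)
  rw [Fintype.card_fin, Nat.sub_self, pow_zero, one_mul, det_fin_one] at schur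
  rw [borderedMinor, submatrix_eq, schur]
  rfl

theorem det_of_borderedMinor [Fintype n] [DecidableEq n] [Nonempty n]
    (M : Matrix (m ⊕ n) (m ⊕ n) R) :
    (of (borderedMinor M)).det = M.toBlocks₁₁.det ^ (Fintype.card n - 1) * M.det := by
  conv_rhs => rw [← fromBlocks_toBlocks M, toBlocks_fromBlocks₁₁,
    det_pow_card_sub_one_mul_det_fromBlocks]
  congr 1
  ext i j
  rw [of_apply, ← borderedMinor_fromBlocks, fromBlocks_toBlocks]

end Sylvester

section DesnanotJacobi

variable {R : Type*} [CommRing R] {m : ℕ}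

theorem finSumFinEquiv_comp_sumMap_id_const (i : Fin 2) :
    (finSumFinEquiv : Fin m ⊕ Fin 2 ≃ Fin (m + 2)) ∘ Sum.map id (fun _ : Fin 1 => i) =
      (Fin.natAdd m i.rev).succAbove ∘ finSumFinEquiv := by
  ext (k | k) <;> fin_cases i <;> simp [Fin.succAbove, Fin.lt_def]

theorem borderedMinor_submatrix_finSumFinEquiv (A : Matrix (Fin (m + 2)) (Fin (m + 2)) R)
    (i j : Fin 2) :
    borderedMinor (A.submatrix finSumFinEquiv finSumFinEquiv) i j =
      (A.submatrix (Fin.natAdd m i.rev).succAbove (Fin.natAdd m j.rev).succAbove).det := by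
  rw [borderedMinor, submatrix_submatrix, finSumFinEquiv_comp_sumMap_id_const,
    finSumFinEquiv_comp_sumMap_id_const, ← submatrix_submatrix, det_submatrix_equiv_self]

theorem det_mul_det_submatrix_castSucc_castSucc (A : Matrix (Fin (m + 2)) (Fin (m + 2)) R) :
    A.det * (A.submatrix (Fin.castSucc ∘ Fin.castSucc) (Fin.castSucc ∘ Fin.castSucc)).det =
      (A.submatrix Fin.castSucc Fin.castSucc).det *
        (A.submatrix (Fin.last m).castSucc.succAbove (Fin.last m).castSucc.succAbove).det -
      (A.submatrix Fin.castSucc (Fin.last m).castSucc.succAbove).det *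
        (A.submatrix (Fin.last m).castSucc.succAbove Fin.castSucc).det := by
  have last_eq : Fin.natAdd m (Fin.rev (0 : Fin 2)) = Fin.last (m + 1) := rfl
  have castSucc_last_eq : Fin.natAdd m (Fin.rev (1 : Fin 2)) = (Fin.last m).castSucc := rfl
  have core_eq : (A.submatrix finSumFinEquiv finSumFinEquiv).toBlocks₁₁ =
      A.submatrix (Fin.castSucc ∘ Fin.castSucc) (Fin.castSucc ∘ Fin.castSucc) := rfl
  have sylvester := det_of_borderedMinor (A.submatrix finSumFinEquiv finSumFinEquiv)
  simp only [det_fin_two, of_apply, borderedMinor_submatrix_finSumFinEquiv, last_eq,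
    castSucc_last_eq, Fin.succAbove_last, Fintype.card_fin, core_eq, det_submatrix_equiv_self,
    Nat.add_one_sub_one, pow_one] at sylvester
  rw [mul_comm, ← sylvester]

theorem finRotate_comp_castSucc : finRotate (m + 1) ∘ Fin.castSucc = Fin.succ := by
  ext i : 1
  rw [Function.comp_apply, finRotate_apply, Fin.coeSucc_eq_succ]

theorem finRotate_comp_succAbove_castSucc_last :
    finRotate (m + 2) ∘ (Fin.last m).castSucc.succAbove = Fin.castSucc ∘ finRotate (m + 1) := by
  ext i : 1
  induction i using Fin.lastCases with
  | last => simp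
  | cast i => simp [Fin.succAbove, Fin.lt_def]

theorem det_submatrix_finRotate (A : Matrix (Fin (m + 1)) (Fin (m + 1)) R) :
    (A.submatrix (finRotate (m + 1)) id).det = (-1) ^ m * A.det := by
  simp [det_permute]

-- Moving the first row to the bottom reduces to the case where the last two rows are deleted.
theorem det_mul_det_submatrix_succ_castSucc (A : Matrix (Fin (m + 2)) (Fin (m + 2)) R) :
    A.det * (A.submatrix (Fin.succ ∘ Fin.castSucc) (Fin.castSucc ∘ Fin.castSucc)).det =
      (A.submatrix Fin.castSucc Fin.castSucc).det *
        (A.submatrix Fin.succ (Fin.last m).castSucc.succAbove).det -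
      (A.submatrix Fin.castSucc (Fin.last m).castSucc.succAbove).det *
        (A.submatrix Fin.succ Fin.castSucc).det := by
  have rotated_minor (f : Fin (m + 1) → Fin (m + 2)) :
      (A.submatrix (Fin.castSucc ∘ finRotate (m + 1)) f).det =
        (-1) ^ m * (A.submatrix Fin.castSucc f).det :=
    det_submatrix_finRotate (A.submatrix Fin.castSucc f)
  have rotated := det_mul_det_submatrix_castSucc_castSucc (A.submatrix (finRotate (m + 2)) id)
  simp only [submatrix_submatrix, Function.id_comp, ← Function.comp_assoc,
    finRotate_comp_castSucc, finRotate_comp_succAbove_castSucc_last, det_submatrix_finRotate,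
    rotated_minor] at rotated
  refine (isUnit_one.neg.pow m).mul_left_cancel ?_
  linear_combination -rotated

end DesnanotJacobi

section Toeplitz

variable {R : Type*}

/-- The Toeplitz matrix `(u_{j-k})` of size `N`, whose determinant is `D_N[u]`. -/
def toeplitz (u : ℤ → R) (N : ℕ) : Matrix (Fin N) (Fin N) R :=
  of fun j k => u ((j : ℤ) - (k : ℤ))

/-- The one-bordered Toeplitz matrix, whose determinant is `D_N^B[u; v]`. Rows and columns are
numbered from `0`, so the border is column `N - 1` and has entries `v_{N-1-j}`. -/
def borderedToeplitz₁ (u v : ℤ → R) (N : ℕ) : Matrix (Fin N) (Fin N) R :=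
  of fun j k =>
    if (k : ℕ) < N - 1 then u ((k : ℤ) - (j : ℤ)) else v ((N : ℤ) - 1 - (j : ℤ))

/-- The two-bordered Toeplitz matrix, whose determinant is `D_N^B[u; v, w]`, with the same
indexing as `borderedToeplitz₁`. -/
def borderedToeplitz₂ (u v w : ℤ → R) (N : ℕ) : Matrix (Fin N) (Fin N) R :=
  of fun j k =>
    if (k : ℕ) < N - 2 then u ((k : ℤ) - (j : ℤ))
    else if (k : ℕ) = N - 2 then v ((N : ℤ) - 1 - (j : ℤ))
    else w ((N : ℤ) - 1 - (j : ℤ))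

variable (m : ℕ) (a b c : ℤ → R)

theorem borderedToeplitz₂_submatrix_succ_castSucc_castSucc :
    (borderedToeplitz₂ a b c (m + 2)).submatrix (Fin.succ ∘ Fin.castSucc)
      (Fin.castSucc ∘ Fin.castSucc) = (toeplitz (fun r => a (r - 1)) m)ᵀ := by
  ext j k
  simp [borderedToeplitz₂, toeplitz, sub_sub]

theorem borderedToeplitz₂_submatrix_castSucc_castSucc :
    (borderedToeplitz₂ a b c (m + 2)).submatrix Fin.castSucc Fin.castSucc =
      borderedToeplitz₁ a (fun r => b (r + 1)) (m + 1) := by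
  ext j k
  induction k using Fin.lastCases with
  | last =>
    have index_eq : (m : ℤ) + 2 - 1 - j = m - j + 1 := by ring
    simp [borderedToeplitz₂, borderedToeplitz₁, index_eq]
  | cast k => simp [borderedToeplitz₂, borderedToeplitz₁]

theorem borderedToeplitz₂_submatrix_castSucc_succAbove :
    (borderedToeplitz₂ a b c (m + 2)).submatrix Fin.castSucc (Fin.last m).castSucc.succAbove =
      borderedToeplitz₁ a (fun r => c (r + 1)) (m + 1) := by
  ext j k
  induction k using Fin.lastCases with
  | last =>
    have index_eq : (m : ℤ) + 2 - 1 - j = m - j + 1 := by ring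
    simp [borderedToeplitz₂, borderedToeplitz₁, index_eq]
  | cast k => simp [borderedToeplitz₂, borderedToeplitz₁]

theorem borderedToeplitz₂_submatrix_succ_castSucc :
    (borderedToeplitz₂ a b c (m + 2)).submatrix Fin.succ Fin.castSucc =
      borderedToeplitz₁ (fun r => a (r - 1)) b (m + 1) := by
  ext j k
  induction k using Fin.lastCases with
  | last =>
    have index_eq : (m : ℤ) + 2 - 1 - (j + 1) = m - j := by ring
    simp [borderedToeplitz₂, borderedToeplitz₁, index_eq]
  | cast k => simp [borderedToeplitz₂, borderedToeplitz₁, sub_sub]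

theorem borderedToeplitz₂_submatrix_succ_succAbove :
    (borderedToeplitz₂ a b c (m + 2)).submatrix Fin.succ (Fin.last m).castSucc.succAbove =
      borderedToeplitz₁ (fun r => a (r - 1)) c (m + 1) := by
  ext j k
  induction k using Fin.lastCases with
  | last =>
    have index_eq : (m : ℤ) + 2 - 1 - (j + 1) = m - j := by ring
    simp [borderedToeplitz₂, borderedToeplitz₁, index_eq]
  | cast k => simp [borderedToeplitz₂, borderedToeplitz₁, sub_sub]

end Toeplitz

theorem bordered_toeplitz_dodgson_condensation_general {R : Type*} [CommRing R] (m : ℕ)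
    (a b c : ℤ → R) :
    (borderedToeplitz₂ a b c (m + 2)).det * (toeplitz (fun r => a (r - 1)) m).det =
      (borderedToeplitz₁ a (fun r => b (r + 1)) (m + 1)).det *
        (borderedToeplitz₁ (fun r => a (r - 1)) c (m + 1)).det -
      (borderedToeplitz₁ a (fun r => c (r + 1)) (m + 1)).det *
        (borderedToeplitz₁ (fun r => a (r - 1)) b (m + 1)).det := by
  have desnanot_jacobi := det_mul_det_submatrix_succ_castSucc (borderedToeplitz₂ a b c (m + 2))
  rwa [borderedToeplitz₂_submatrix_succ_castSucc_castSucc, det_transpose,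
    borderedToeplitz₂_submatrix_castSucc_castSucc, borderedToeplitz₂_submatrix_succ_succAbove,
    borderedToeplitz₂_submatrix_castSucc_succAbove,
    borderedToeplitz₂_submatrix_succ_castSucc] at desnanot_jacobi

/-- The Dodgson condensation identity for two-bordered Toeplitz determinants:
`D_n^B[a; b, c] · D_{n-2}[Sa]
  = D_{n-1}^B[a; S⁻¹b] · D_{n-1}^B[Sa; c] − D_{n-1}^B[a; S⁻¹c] · D_{n-1}^B[Sa; b]`,
where `(Sf)_r = f_{r-1}` and `(S⁻¹f)_r = f_{r+1}`. -/
theorem bordered_toeplitz_dodgson_condensation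
    (n : ℕ) (hn : 3 ≤ n) (a b c : ℤ → ℂ) :
    borderedDet₂ a b c n * pureToeplitzDet (fun r => a (r - 1)) (n - 2) =
      borderedDet₁ a (fun r => b (r + 1)) (n - 1) *
        borderedDet₁ (fun r => a (r - 1)) c (n - 1) -
      borderedDet₁ a (fun r => c (r + 1)) (n - 1) *
        borderedDet₁ (fun r => a (r - 1)) b (n - 1) := by
  obtain ⟨m, rfl⟩ := Nat.exists_eq_add_of_le' (show 2 ≤ n by lia)
  exact bordered_toeplitz_dodgson_condensation_general m a b c
end
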